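/- Let M = {m1, m2, m3}, W = {w1, w2, w3}, and let P be the preference profile in which every agent ranks being unmatched last and: m1 ranks w1, w2, w3; m2 ranks w1, w3, w2; m3 ranks w3, w1, w2; w1 ranks m1, m2, m3; w2 ranks m1, m3, m2; w3 ranks m3, m1, m2. If φ is an ex-post pairwise stable mechanism, then for every permutation σ of M ∪ W with σ(M) = M and σ(W) = W, letting P' be the permutation of P obtained by σ, the mechanism output φ(P') equals the matching {σ(m1)σ(w1), σ(m2)σ(w2), σ(m3)σ(w3)} with probability 1; in particular, at every permutation of P, exactly four agents receive their first choice and two agents receive their third choice, with certainty. -/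

import Mathlib

open scoped ENNReal

namespace Unraveling

variable (M W : Type*) [Fintype M] [DecidableEq M] [Fintype W] [DecidableEq W]

/-- A matching between men `M` and women `W`.  `Sum.inl m` denotes man `m`,
`Sum.inr w` denotes woman `w`; `toFun a = a` means agent `a` is unmatched. -/
structure Matching where
  toFun : M ⊕ W → M ⊕ W
  man_range : ∀ m : M, toFun (Sum.inl m) = Sum.inl m ∨ ∃ w : W, toFun (Sum.inl m) = Sum.inr w
  woman_range : ∀ w : W, toFun (Sum.inr w) = Sum.inr w ∨ ∃ m : M, toFun (Sum.inr w) = Sum.inl m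
  mutual_cond : ∀ (m : M) (w : W), toFun (Sum.inl m) = Sum.inr w ↔ toFun (Sum.inr w) = Sum.inl m

/-- A preference profile: each man has a ranking (a bijection onto `{1,…,|W|+1}`,
encoded as an `Equiv` onto `Fin (|W|+1)`) of the women together with the option
(`none`) of remaining unmatched, and symmetrically for women. -/
structure Profile where
  mpref : M → (Option W ≃ Fin (Fintype.card W + 1))
  wpref : W → (Option M ≃ Fin (Fintype.card M + 1))

variable {M W}

/-- The partner of man `m` under matching `μ` (`none` if unmatched). -/
def Matching.partnerM (μ : Matching M W) (m : M) : Option W :=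
  match μ.toFun (Sum.inl m) with
  | Sum.inl _ => none
  | Sum.inr w => some w

/-- The partner of woman `w` under matching `μ` (`none` if unmatched). -/
def Matching.partnerW (μ : Matching M W) (w : W) : Option M :=
  match μ.toFun (Sum.inr w) with
  | Sum.inr _ => none
  | Sum.inl m => some m

/-- The rank (`1` = most preferred) that man `m` assigns to `o` under profile `P`. -/
def mrank (P : Profile M W) (m : M) (o : Option W) : ℕ := (P.mpref m o : ℕ) + 1

/-- The rank (`1` = most preferred) that woman `w` assigns to `o` under profile `P`. -/
def wrank (P : Profile M W) (w : W) (o : Option M) : ℕ := (P.wpref w o : ℕ) + 1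

/-- The rank that agent `a` assigns to his/her partner under matching `μ`. -/
def prank (P : Profile M W) (μ : Matching M W) : M ⊕ W → ℕ
  | Sum.inl m => mrank P m (μ.partnerM m)
  | Sum.inr w => wrank P w (μ.partnerW w)

/-- The rank that agent `a` assigns to remaining unmatched. -/
def urank (P : Profile M W) : M ⊕ W → ℕ
  | Sum.inl m => mrank P m none
  | Sum.inr w => wrank P w none

/-- Stability of a matching at a profile. -/
def IsStable (P : Profile M W) (μ : Matching M W) : Prop :=
  (∀ a : M ⊕ W, prank P μ a ≤ urank P a) ∧
  (∀ (m : M) (w : W), mrank P m (some w) < prank P μ (Sum.inl m) →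
     prank P μ (Sum.inr w) < wrank P w (some m))

/-- A mechanism maps each preference profile to a probability distribution over matchings. -/
abbrev Mechanism (M W : Type*) [Fintype M] [DecidableEq M] [Fintype W] [DecidableEq W] :=
  Profile M W → PMF (Matching M W)

/-- The probability that `p` assigns to the set `s`. -/
noncomputable def prob {α : Type*} (p : PMF α) (s : Set α) : ℝ≥0∞ :=
  ∑' x, s.indicator (fun y => p y) x

/-- CDF of the rank that agent `a` assigns to his/her random partner, when the
matching is drawn from `p` and the profile is `P`. -/
noncomputable def cdfAt (P : Profile M W) (p : PMF (Matching M W)) (a : M ⊕ W) (n : ℕ) : ℝ≥0∞ :=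
  prob p {μ | prank P μ a ≤ n}

/-- `SD F G` : the rank distribution with CDF `F` strictly first-order
stochastically dominates the one with CDF `G`. -/
def SD (F G : ℕ → ℝ≥0∞) : Prop := (∀ n, G n ≤ F n) ∧ ∃ n, G n < F n

/-- A coalition consisting of at most one man and at most one woman. -/
def IsPairCoalition (A' : Set (M ⊕ W)) : Prop :=
  {m : M | Sum.inl m ∈ A'}.Subsingleton ∧ {w : W | Sum.inr w ∈ A'}.Subsingleton

/-- Coalition `A'` blocks mechanism `φ` ex-post at profile `P`. -/
def BlocksExPost (A' : Set (M ⊕ W)) (φ : Mechanism M W) (P : Profile M W) : Prop :=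
  A'.Nonempty ∧ ∃ φ' : Mechanism M W,
    (∀ a ∈ A', prob (φ' P) {μ | μ.toFun a ∈ A'} = 1) ∧
    (∀ a ∈ A', SD (cdfAt P (φ' P) a) (cdfAt P (φ P) a))

def ExPostStable (φ : Mechanism M W) : Prop :=
  ∀ (P : Profile M W) (A' : Set (M ⊕ W)), ¬ BlocksExPost A' φ P

def ExPostPairwiseStable (φ : Mechanism M W) : Prop :=
  ∀ (P : Profile M W) (A' : Set (M ⊕ W)), IsPairCoalition A' → ¬ BlocksExPost A' φ P

/-- Ex-ante CDF of the rank of agent `a`'s partner under mechanism `φ`, when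
the profile is drawn from prior `ψ`. -/
noncomputable def cdfExAnte (ψ : PMF (Profile M W)) (φ : Mechanism M W) (a : M ⊕ W) (n : ℕ) : ℝ≥0∞ :=
  ∑' P, ψ P * cdfAt P (φ P) a n

/-- Coalition `A'` blocks mechanism `φ` ex-ante at prior `ψ`. -/
def BlocksExAnte (A' : Set (M ⊕ W)) (φ : Mechanism M W) (ψ : PMF (Profile M W)) : Prop :=
  A'.Nonempty ∧ ∃ φ' : Mechanism M W,
    (∀ a ∈ A', (∑' P, ψ P * prob (φ' P) {μ | μ.toFun a ∈ A'}) = 1) ∧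
    (∀ a ∈ A', SD (cdfExAnte ψ φ' a) (cdfExAnte ψ φ a))

def ExAnteStableAt (φ : Mechanism M W) (ψ : PMF (Profile M W)) : Prop :=
  ∀ A' : Set (M ⊕ W), ¬ BlocksExAnte A' φ ψ

def ExAnteStable (φ : Mechanism M W) : Prop := ∀ ψ, ExAnteStableAt φ ψ

def ExAntePairwiseStable (φ : Mechanism M W) : Prop :=
  ∀ (ψ : PMF (Profile M W)) (A' : Set (M ⊕ W)), IsPairCoalition A' → ¬ BlocksExAnte A' φ ψ

/-- `prefEq P P' a` : profiles `P` and `P'` give agent `a` the same preferences. -/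
def prefEq (P P' : Profile M W) : M ⊕ W → Prop
  | Sum.inl m => P.mpref m = P'.mpref m
  | Sum.inr w => P.wpref w = P'.wpref w

/-- The event `Y_a(P̃_a)`: profiles in which `a`'s preferences agree with `Pt`
and every other member of the coalition `A'` has preferences in his/her
acceptance set `R`. -/
def interimEvent (A' : Set (M ⊕ W)) (R : (M ⊕ W) → Set (Profile M W)) (a : M ⊕ W)
    (Pt : Profile M W) : Set (Profile M W) :=
  {P | prefEq P Pt a ∧ ∀ a' ∈ A', a' ≠ a → P ∈ R a'}

/-- CDF of the rank of `a`'s partner under `φ`, with the profile drawn from `ψ`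
conditioned on the event `Y`. -/
noncomputable def cdfCond (ψ : PMF (Profile M W)) (Y : Set (Profile M W)) (φ : Mechanism M W)
    (a : M ⊕ W) (n : ℕ) : ℝ≥0∞ :=
  (∑' P, Y.indicator (fun P' => ψ P' * cdfAt P' (φ P') a n) P) / prob ψ Y

/-- Coalition `A'` blocks mechanism `φ` in the interim at prior `ψ`.  Each `R a`
is the set of profiles in which `a`'s preferences are ones at which `a` agrees to
deviate; it is required to depend only on `a`'s own preferences. -/
def BlocksInterim (A' : Set (M ⊕ W)) (φ : Mechanism M W) (ψ : PMF (Profile M W)) : Prop :=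
  A'.Nonempty ∧ ∃ (φ' : Mechanism M W) (R : (M ⊕ W) → Set (Profile M W)),
    (∀ (a : M ⊕ W) (P P' : Profile M W), prefEq P P' a → (P ∈ R a ↔ P' ∈ R a)) ∧
    (∀ a ∈ A', ∀ P : Profile M W, prob (φ' P) {μ | μ.toFun a ∈ A'} = 1) ∧
    (∀ a ∈ A', ∀ Pt : Profile M W,
      Pt ∈ R a ↔ (0 < prob ψ (interimEvent A' R a Pt) ∧
        SD (cdfCond ψ (interimEvent A' R a Pt) φ' a)
           (cdfCond ψ (interimEvent A' R a Pt) φ a))) ∧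
    0 < prob ψ {P | ∀ a ∈ A', P ∈ R a}

def InterimStableAt (φ : Mechanism M W) (ψ : PMF (Profile M W)) : Prop :=
  ∀ A' : Set (M ⊕ W), ¬ BlocksInterim A' φ ψ

def InterimStable (φ : Mechanism M W) : Prop := ∀ ψ, InterimStableAt φ ψ

def InterimPairwiseStable (φ : Mechanism M W) : Prop :=
  ∀ (ψ : PMF (Profile M W)) (A' : Set (M ⊕ W)), IsPairCoalition A' → ¬ BlocksInterim A' φ ψ

/-- `MRanks P m rw ru` : man `m` assigns rank `rw w` to each woman `w` and
rank `ru` to remaining unmatched. -/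
def MRanks (P : Profile M W) (m : M) (rw : W → ℕ) (ru : ℕ) : Prop :=
  (∀ w, mrank P m (some w) = rw w) ∧ mrank P m none = ru

/-- `WRanks P w rm ru` : woman `w` assigns rank `rm m` to each man `m` and
rank `ru` to remaining unmatched. -/
def WRanks (P : Profile M W) (w : W) (rm : M → ℕ) (ru : ℕ) : Prop :=
  (∀ m, wrank P w (some m) = rm m) ∧ wrank P w none = ru

instance (P : Profile M W) (m : M) (rw : W → ℕ) (ru : ℕ) : Decidable (MRanks P m rw ru) :=
  decidable_of_iff ((∀ w, mrank P m (some w) = rw w) ∧ mrank P m none = ru) Iff.rfl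

instance (P : Profile M W) (w : W) (rm : M → ℕ) (ru : ℕ) : Decidable (WRanks P w rm ru) :=
  decidable_of_iff ((∀ m, wrank P w (some m) = rm m) ∧ wrank P w none = ru) Iff.rfl

/-- The perfect matching induced by a bijection `e : M ≃ W`. -/
def matchingOf (e : M ≃ W) : Matching M W where
  toFun a :=
    match a with
    | Sum.inl m => Sum.inr (e m)
    | Sum.inr w => Sum.inl (e.symm w)
  man_range m := Or.inr ⟨e m, rfl⟩
  woman_range w := Or.inr ⟨e.symm w, rfl⟩
  mutual_cond m w := by
    constructor
    · intro h
      simp only [Sum.inr.injEq] at h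
      simp [← h]
    · intro h
      simp only [Sum.inl.injEq] at h
      simp [← h]

/-- `P'` is the permutation of profile `P` obtained by (`σM`, `σW`):
`P_a(a') = P'_{σ(a)}(σ(a'))` for all agents `a` and all `a'` in the domain of `P_a`. -/
def IsPermutedProfile (σM : Equiv.Perm M) (σW : Equiv.Perm W) (P P' : Profile M W) : Prop :=
  (∀ m w, P'.mpref (σM m) (some (σW w)) = P.mpref m (some w)) ∧
  (∀ m, P'.mpref (σM m) none = P.mpref m none) ∧
  (∀ w m, P'.wpref (σW w) (some (σM m)) = P.wpref w (some m)) ∧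
  (∀ w, P'.wpref (σW w) none = P.wpref w none)

/-- Probability (jointly over the profile drawn from `ψ` and the internal
randomization of `φ`) that agent `a` is assigned a partner of rank exactly `k`. -/
noncomputable def probRankEq (ψ : PMF (Profile M W)) (φ : Mechanism M W) (a : M ⊕ W) (k : ℕ) : ℝ≥0∞ :=
  ∑' P, ψ P * prob (φ P) {μ | prank P μ a = k}

/-- CDF of a distribution on ranks `{1,2,3}` with probabilities `q1`, `q2`, `q3`. -/
def cdf3 (q1 q2 q3 : ℝ) (n : ℕ) : ℝ :=
  (if 1 ≤ n then q1 else 0) + (if 2 ≤ n then q2 else 0) + (if 3 ≤ n then q3 else 0)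

/-- Strict first-order stochastic dominance for real-valued rank CDFs. -/
def SDR (F G : ℕ → ℝ) : Prop := (∀ n, G n ≤ F n) ∧ ∃ n, G n < F n

end Unraveling

namespace Unraveling

/-!
A man and a woman who weakly prefer each other to every partner they may receive must be matched
with certainty: otherwise they block, since being matched to each other for sure stochastically
dominates any lottery over worse partners. Applied round by round, this forces every ex-post
pairwise stable mechanism to output a matching `e` formed by successively pairing off agents who
rank each other first among those remaining. In Example 2 the pairs `m1 w1` and `m3 w3` are mutual
first choices, and `m2`, `w2` are the only agents left after that; the condition is invariant under
relabelling the agents.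
-/

section

variable {M W : Type*}

namespace Matching

variable {μ : Matching M W} {m m' : M} {w : W}

lemma partnerM_eq_some_iff : μ.partnerM m = some w ↔ μ.toFun (Sum.inl m) = Sum.inr w := by
  unfold partnerM
  split <;> simp_all

lemma partnerW_eq_some_iff : μ.partnerW w = some m ↔ μ.toFun (Sum.inr w) = Sum.inl m := by
  unfold partnerW
  split <;> simp_all

lemma partnerW_eq_some_iff_partnerM : μ.partnerW w = some m ↔ μ.partnerM m = some w := by
  rw [partnerW_eq_some_iff, partnerM_eq_some_iff, μ.mutual_cond]

lemma eq_of_partnerM_eq_some (hm : μ.partnerM m = some w) (hm' : μ.partnerM m' = some w) :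
    m = m' := by
  rw [← partnerW_eq_some_iff_partnerM] at hm hm'
  exact Option.some.inj (hm.symm.trans hm')

lemma eq_matchingOf {e : M ≃ W} (h : ∀ m, μ.partnerM m = some (e m)) : μ = matchingOf e := by
  have htoFun : μ.toFun = (matchingOf e).toFun := by
    funext a
    rcases a with m | w
    · exact partnerM_eq_some_iff.1 (h m)
    · refine partnerW_eq_some_iff.1 (partnerW_eq_some_iff_partnerM.2 ?_)
      rw [h, e.apply_symm_apply]
  cases μ
  cases htoFun
  rfl

/-- The matching whose only couple is `m` and `w`: the deviation available to that pair. -/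
def couple [DecidableEq M] [DecidableEq W] (m : M) (w : W) : Matching M W where
  toFun := Equiv.swap (Sum.inl m) (Sum.inr w)
  man_range m' := by
    by_cases h : m' = m
    · exact Or.inr ⟨w, by rw [h, Equiv.swap_apply_left]⟩
    · exact Or.inl (Equiv.swap_apply_of_ne_of_ne (by simpa using h) Sum.inl_ne_inr)
  woman_range w' := by
    by_cases h : w' = w
    · exact Or.inr ⟨m, by rw [h, Equiv.swap_apply_right]⟩
    · exact Or.inl (Equiv.swap_apply_of_ne_of_ne Sum.inr_ne_inl (by simpa using h))
  mutual_cond m' w' := by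
    rw [Equiv.swap_apply_eq_iff, eq_comm]

lemma partnerM_couple [DecidableEq M] [DecidableEq W] (m : M) (w : W) :
    (couple m w).partnerM m = some w :=
  partnerM_eq_some_iff.2 (Equiv.swap_apply_left _ _)

lemma partnerM_matchingOf (e : M ≃ W) (m : M) : (matchingOf e).partnerM m = some (e m) := rfl

lemma partnerW_matchingOf (e : M ≃ W) (w : W) : (matchingOf e).partnerW w = some (e.symm w) := rfl

end Matching

lemma prob_eq_toOuterMeasure {α : Type*} (p : PMF α) (s : Set α) :
    prob p s = p.toOuterMeasure s :=
  (p.toOuterMeasure_apply s).symm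

lemma isPairCoalition_pair (m : M) (w : W) : IsPairCoalition {Sum.inl m, Sum.inr w} := by
  constructor <;> simp

variable [Fintype M] [Fintype W] {P : Profile M W}

lemma mrank_injective (P : Profile M W) (m : M) : Function.Injective (mrank P m) :=
  (Nat.succ_injective.comp Fin.val_injective).comp (P.mpref m).injective

lemma wrank_injective (P : Profile M W) (w : W) : Function.Injective (wrank P w) :=
  (Nat.succ_injective.comp Fin.val_injective).comp (P.wpref w).injective

section RankDistribution

variable {p : PMF (Matching M W)} {a : M ⊕ W} {n : ℕ}

lemma cdfAt_eq_zero_iff : cdfAt P p a n = 0 ↔ ∀ μ ∈ p.support, n < prank P μ a := by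
  rw [cdfAt, prob_eq_toOuterMeasure, PMF.toOuterMeasure_apply_eq_zero_iff, Set.disjoint_left]
  simp only [Set.mem_ofPred_eq, not_le]

lemma cdfAt_eq_one_iff : cdfAt P p a n = 1 ↔ ∀ μ ∈ p.support, prank P μ a ≤ n := by
  rw [cdfAt, prob_eq_toOuterMeasure, PMF.toOuterMeasure_apply_eq_one_iff]
  rfl

lemma cdfAt_le_one (P : Profile M W) (p : PMF (Matching M W)) (a : M ⊕ W) (n : ℕ) :
    cdfAt P p a n ≤ 1 := by
  rw [cdfAt, prob, ← p.tsum_coe]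
  exact ENNReal.tsum_le_tsum (Set.indicator_le_self _ _)

lemma sd_cdfAt_pure {ν : Matching M W} (hle : ∀ μ ∈ p.support, prank P ν a ≤ prank P μ a)
    (hlt : ∃ μ ∈ p.support, prank P ν a < prank P μ a) :
    SD (cdfAt P (PMF.pure ν) a) (cdfAt P p a) := by
  have pure_eq_one {n : ℕ} (hn : prank P ν a ≤ n) : cdfAt P (PMF.pure ν) a n = 1 := by
    simpa [cdfAt_eq_one_iff] using hn
  refine ⟨fun n => ?_, prank P ν a, ?_⟩
  · rcases le_or_gt (prank P ν a) n with hn | hn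
    · exact (cdfAt_le_one P p a n).trans_eq (pure_eq_one hn).symm
    · rw [cdfAt_eq_zero_iff.2 fun μ hμ => hn.trans_le (hle μ hμ)]
      exact zero_le
  · obtain ⟨μ, hμ, hνμ⟩ := hlt
    rw [pure_eq_one le_rfl]
    exact (cdfAt_le_one P p a _).lt_of_ne fun h => (cdfAt_eq_one_iff.1 h μ hμ).not_gt hνμ

end RankDistribution

variable {e : M ≃ W}

/-- The sequential preference condition: the couples of `e` can be formed in rounds, `m` and `e m`
in round `r m`, so that both weakly prefer each other to staying unmatched and to everyone not
paired off in an earlier round. Women are indexed by their partner under `e`. -/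
structure IsSequentiallyTop (P : Profile M W) (e : M ≃ W) (r : M → ℕ) : Prop where
  mrank_le_none : ∀ m, mrank P m (some (e m)) ≤ mrank P m none
  mrank_le_some : ∀ m m', r m ≤ r m' → mrank P m (some (e m)) ≤ mrank P m (some (e m'))
  wrank_le_none : ∀ m, wrank P (e m) (some m) ≤ wrank P (e m) none
  wrank_le_some : ∀ m m', r m ≤ r m' → wrank P (e m) (some m) ≤ wrank P (e m) (some m')

namespace IsSequentiallyTop

variable {r : M → ℕ} {μ : Matching M W} {m : M}

lemma mrank_le_prank (h : IsSequentiallyTop P e r)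
    (hμ : ∀ m', r m' < r m → μ.partnerM m' = some (e m')) :
    mrank P m (some (e m)) ≤ prank P μ (Sum.inl m) := by
  change _ ≤ mrank P m (μ.partnerM m)
  rcases hm : μ.partnerM m with _ | w
  · exact h.mrank_le_none m
  obtain ⟨m', rfl⟩ := e.surjective w
  refine h.mrank_le_some m m' (not_lt.1 fun hlt => hlt.ne ?_)
  rw [Matching.eq_of_partnerM_eq_some hm (hμ m' hlt)]

lemma wrank_le_prank (h : IsSequentiallyTop P e r)
    (hμ : ∀ m', r m' < r m → μ.partnerM m' = some (e m')) :
    wrank P (e m) (some m) ≤ prank P μ (Sum.inr (e m)) := by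
  change _ ≤ wrank P (e m) (μ.partnerW (e m))
  rcases hw : μ.partnerW (e m) with _ | m'
  · exact h.wrank_le_none m
  have hm' : μ.partnerM m' = some (e m) := Matching.partnerW_eq_some_iff_partnerM.1 hw
  refine h.wrank_le_some m m' (not_lt.1 fun hlt => hlt.ne ?_)
  rw [e.injective (Option.some.inj ((hμ m' hlt).symm.trans hm'))]

end IsSequentiallyTop

namespace IsPermutedProfile

variable {σM : Equiv.Perm M} {σW : Equiv.Perm W} {P' : Profile M W}

lemma mrank_map (h : IsPermutedProfile σM σW P P') (m : M) (o : Option W) :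
    mrank P' (σM m) (o.map σW) = mrank P m o := by
  cases o with
  | none => simp only [mrank, Option.map_none, h.2.1]
  | some w => simp only [mrank, Option.map_some, h.1]

lemma wrank_map (h : IsPermutedProfile σM σW P P') (w : W) (o : Option M) :
    wrank P' (σW w) (o.map σM) = wrank P w o := by
  cases o with
  | none => simp only [wrank, Option.map_none, h.2.2.2]
  | some m => simp only [wrank, Option.map_some, h.2.2.1]

lemma prank_matchingOf (h : IsPermutedProfile σM σW P P') (e : M ≃ W) (a : M ⊕ W) :
    prank P' (matchingOf ((σM.symm.trans e).trans σW)) (Equiv.sumCongr σM σW a) =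
      prank P (matchingOf e) a := by
  cases a with
  | inl m =>
    simpa [prank, Matching.partnerM_matchingOf] using h.mrank_map m (some (e m))
  | inr w =>
    simpa [prank, Matching.partnerW_matchingOf] using h.wrank_map w (some (e.symm w))

lemma card_filter_prank_matchingOf (h : IsPermutedProfile σM σW P P') (e : M ≃ W) (k : ℕ) :
    (Finset.univ.filter
      fun a => prank P' (matchingOf ((σM.symm.trans e).trans σW)) a = k).card =
      (Finset.univ.filter fun a => prank P (matchingOf e) a = k).card :=
  (Finset.card_equiv (Equiv.sumCongr σM σW) fun a => by
    simp only [Finset.mem_filter_univ, h.prank_matchingOf]).symm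

lemma isSequentiallyTop {r : M → ℕ} (h : IsPermutedProfile σM σW P P')
    (hP : IsSequentiallyTop P e r) :
    IsSequentiallyTop P' ((σM.symm.trans e).trans σW) (r ∘ σM.symm) where
  mrank_le_none := σM.forall_congr_right.1 fun m => by
    simpa [← h.mrank_map] using hP.mrank_le_none m
  mrank_le_some := σM.forall_congr_right.1 fun m => σM.forall_congr_right.1 fun m' => by
    simpa [← h.mrank_map] using hP.mrank_le_some m m'
  wrank_le_none := σM.forall_congr_right.1 fun m => by
    simpa [← h.wrank_map] using hP.wrank_le_none m
  wrank_le_some := σM.forall_congr_right.1 fun m => σM.forall_congr_right.1 fun m' => by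
    simpa [← h.wrank_map] using hP.wrank_le_some m m'

end IsPermutedProfile

variable [DecidableEq M] [DecidableEq W] {φ : Mechanism M W}

lemma blocksExPost_pair {m : M} {w : W}
    (hm : ∀ μ ∈ (φ P).support, mrank P m (some w) ≤ prank P μ (Sum.inl m))
    (hw : ∀ μ ∈ (φ P).support, wrank P w (some m) ≤ prank P μ (Sum.inr w))
    (h : ∃ μ ∈ (φ P).support, μ.partnerM m ≠ some w) :
    BlocksExPost {Sum.inl m, Sum.inr w} φ P := by
  obtain ⟨μ, hμ, hne⟩ := h
  have hM : (Matching.couple m w).partnerM m = some w := Matching.partnerM_couple m w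
  have hW : (Matching.couple m w).partnerW w = some m :=
    Matching.partnerW_eq_some_iff_partnerM.2 hM
  have prankM : prank P (Matching.couple m w) (Sum.inl m) = mrank P m (some w) :=
    congrArg (mrank P m) hM
  have prankW : prank P (Matching.couple m w) (Sum.inr w) = wrank P w (some m) :=
    congrArg (wrank P w) hW
  refine ⟨⟨Sum.inl m, Set.mem_insert _ _⟩, fun _ => PMF.pure (Matching.couple m w), ?_, ?_⟩
  · intro a ha
    rw [prob_eq_toOuterMeasure, PMF.toOuterMeasure_apply_eq_one_iff, PMF.support_pure,
      Set.singleton_subset_iff]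
    rcases ha with rfl | rfl
    · exact Or.inr (Matching.partnerM_eq_some_iff.1 hM)
    · exact Or.inl (Matching.partnerW_eq_some_iff.1 hW)
  · rintro a (rfl | rfl)
    · refine sd_cdfAt_pure (prankM ▸ hm) ⟨μ, hμ, prankM ▸ (hm μ hμ).lt_of_ne fun heq => hne ?_⟩
      exact (mrank_injective P m heq).symm
    · refine sd_cdfAt_pure (prankW ▸ hw) ⟨μ, hμ, prankW ▸ (hw μ hμ).lt_of_ne fun heq => hne ?_⟩
      exact Matching.partnerW_eq_some_iff_partnerM.1 (wrank_injective P w heq).symm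

lemma ExPostPairwiseStable.partnerM_eq_some (hφ : ExPostPairwiseStable φ) {m : M} {w : W}
    (hm : ∀ μ ∈ (φ P).support, mrank P m (some w) ≤ prank P μ (Sum.inl m))
    (hw : ∀ μ ∈ (φ P).support, wrank P w (some m) ≤ prank P μ (Sum.inr w)) :
    ∀ μ ∈ (φ P).support, μ.partnerM m = some w := by
  by_contra! h
  exact hφ P _ (isPairCoalition_pair m w) (blocksExPost_pair hm hw h)

namespace IsSequentiallyTop

variable {r : M → ℕ}

lemma partnerM_eq_some (h : IsSequentiallyTop P e r) (hφ : ExPostPairwiseStable φ) (m : M) :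
    ∀ μ ∈ (φ P).support, μ.partnerM m = some (e m) := by
  induction hk : r m using Nat.strong_induction_on generalizing m with
  | _ k ih =>
    have earlier : ∀ μ ∈ (φ P).support, ∀ m', r m' < r m → μ.partnerM m' = some (e m') :=
      fun μ hμ m' hlt => ih (r m') (hk ▸ hlt) m' rfl μ hμ
    exact hφ.partnerM_eq_some (fun μ hμ => h.mrank_le_prank (earlier μ hμ))
      (fun μ hμ => h.wrank_le_prank (earlier μ hμ))

theorem apply_matchingOf_eq_one (h : IsSequentiallyTop P e r) (hφ : ExPostPairwiseStable φ) :
    φ P (matchingOf e) = 1 := by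
  rw [PMF.apply_eq_one_iff, ← (φ P).support_nonempty.subset_singleton_iff]
  exact fun μ hμ => Matching.eq_matchingOf fun m => h.partnerM_eq_some hφ m μ hμ

end IsSequentiallyTop

end

/-- The rank table of Example 2. It serves both sides of the market: `m_i` ranks `w_j` exactly as
`w_i` ranks `m_j`. -/
def example2Rank : Fin 3 → Fin 3 → ℕ :=
  ![![1, 2, 3], ![1, 3, 2], ![2, 3, 1]]

section Example2

variable {P : Profile (Fin 3) (Fin 3)}

lemma isSequentiallyTop_example2 (hm : ∀ i, MRanks P i (example2Rank i) 4)
    (hw : ∀ i, WRanks P i (example2Rank i) 4) :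
    IsSequentiallyTop P (Equiv.refl (Fin 3)) ![0, 1, 0] := by
  constructor <;> simp only [Equiv.refl_apply, (hm _).1, (hm _).2, (hw _).1, (hw _).2] <;> decide

lemma card_filter_prank_example2 (hm : ∀ i, MRanks P i (example2Rank i) 4)
    (hw : ∀ i, WRanks P i (example2Rank i) 4) (k : ℕ) :
    (Finset.univ.filter fun a => prank P (matchingOf (Equiv.refl (Fin 3))) a = k).card =
      2 * (Finset.univ.filter fun i => example2Rank i i = k).card := by
  have prankM (i : Fin 3) : prank P (matchingOf (Equiv.refl (Fin 3))) (Sum.inl i) =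
      example2Rank i i := (hm i).1 i
  have prankW (i : Fin 3) : prank P (matchingOf (Equiv.refl (Fin 3))) (Sum.inr i) =
      example2Rank i i := (hw i).1 i
  simp only [Finset.card_filter, Fintype.sum_sum_type, prankM, prankW, two_mul]

end Example2

/-- For the profile `P` of Example 2 (`m1 : w1,w2,w3`;
`m2 : w1,w3,w2`; `m3 : w3,w1,w2`; `w1 : m1,m2,m3`; `w2 : m1,m3,m2`; `w3 : m3,m1,m2`,
everyone ranking unmatched last), any ex-post pairwise stable mechanism must, at any
permutation `P'` of `P` obtained by (`σM`, `σW`), output with probability 1 the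
matching pairing `σ(m_i)` with `σ(w_i)`; in particular, at every permutation of `P`,
exactly four agents get their first choices and two their third choices, with certainty. -/
theorem stable_mechanism_on_permutations_example2 (P : Profile (Fin 3) (Fin 3))
    (hm1 : MRanks P 0 ![1, 2, 3] 4) (hm2 : MRanks P 1 ![1, 3, 2] 4)
    (hm3 : MRanks P 2 ![2, 3, 1] 4)
    (hw1 : WRanks P 0 ![1, 2, 3] 4) (hw2 : WRanks P 1 ![1, 3, 2] 4)
    (hw3 : WRanks P 2 ![2, 3, 1] 4)
    (φ : Mechanism (Fin 3) (Fin 3)) (hφ : ExPostPairwiseStable φ)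
    (σM σW : Equiv.Perm (Fin 3)) (P' : Profile (Fin 3) (Fin 3))
    (hP' : IsPermutedProfile σM σW P P') :
    φ P' (matchingOf (σM.symm.trans σW)) = 1 ∧
    (Finset.univ.filter
      (fun a : Fin 3 ⊕ Fin 3 => prank P' (matchingOf (σM.symm.trans σW)) a = 1)).card = 4 ∧
    (Finset.univ.filter
      (fun a : Fin 3 ⊕ Fin 3 => prank P' (matchingOf (σM.symm.trans σW)) a = 3)).card = 2 := by
  have hm : ∀ i, MRanks P i (example2Rank i) 4 := by
    intro i
    fin_cases i
    exacts [hm1, hm2, hm3]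
  have hw : ∀ i, WRanks P i (example2Rank i) 4 := by
    intro i
    fin_cases i
    exacts [hw1, hw2, hw3]
  have htop := hP'.isSequentiallyTop (isSequentiallyTop_example2 hm hw)
  have hcard (k : ℕ) := (hP'.card_filter_prank_matchingOf (Equiv.refl (Fin 3)) k).trans
    (card_filter_prank_example2 hm hw k)
  exact ⟨htop.apply_matchingOf_eq_one hφ, (hcard 1).trans (by decide), (hcard 3).trans (by decide)⟩

end Unraveling
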